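/- arXiv:1807.00158 — 2 statements merged into one kernel-verified Lean document; each statement's English description precedes it below -/
import Mathlib

section
/- Let R be a henselian valuation ring of finite Krull dimension, A a finite R-algebra (finitely generated as an R-module), and Q(A^red) → K a finite ring homomorphism with K reduced, where Q(A^red) is the total ring of fractions of A^red. Regarding K as an A-algebra via A → A^red → Q(A^red) → K, the set of pseudo-integral closures of A in K is non-empty. -/
/-!
STATEMENT 7: For a finite algebra `A` over a henselian valuation ring of finite Krull
dimension and a finite ring map `Q(A^red) → K` with `K` reduced, the set of
pseudo-integral closures of `A` in `K` is non-empty.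
-/

open IsLocalRing in
/-- The induced map on residue fields at a prime `q ⊆ B` and its preimage `φ⁻¹(q) ⊆ A`. -/
noncomputable def residueFieldHom {A B : Type*} [CommRing A] [CommRing B] (φ : A →+* B)
    (q : Ideal B) [q.IsPrime] :
    ResidueField (Localization.AtPrime (q.comap φ)) →+* ResidueField (Localization.AtPrime q) :=
  letI := Localization.isLocalHom_localRingHom (q.comap φ) q φ rfl
  ResidueField.map (Localization.localRingHom (q.comap φ) q φ rfl)

/-- A pseudo-integral closure of `A` in `B`: an `A`-subalgebra `C` of the integral closure
`B^ic` of `A` in `B` which is finitely generated as an `A`-module and such that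
`Spec(B^ic) → Spec(C)` is a bijection inducing isomorphisms on all residue fields. -/
def IsPseudoIntegralClosure {A B : Type*} [CommRing A] [CommRing B] [Algebra A B]
    (C : Subalgebra A B) : Prop :=
  ∃ hle : C ≤ integralClosure A B,
    Module.Finite A C ∧
    Function.Bijective (PrimeSpectrum.comap (Subalgebra.inclusion hle).toRingHom) ∧
    ∀ (q : Ideal (integralClosure A B)) (_ : q.IsPrime),
      letI := ‹q.IsPrime›
      Function.Bijective (residueFieldHom (Subalgebra.inclusion hle).toRingHom q)

/-!
The integral closure `B` of `A` in `K` has finitely many primes, whose residue fields are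
essentially of finite type over `A`; finitely many elements of `B` therefore separate all primes and
generate all residue fields, and `C` is the `A`-algebra they generate.

To control `B`, use that `K` is quasi-finite over `R` and that valuation rings are Bézout. Over a
Bézout domain, a linear relation in a torsion-free module can be divided by the gcd of its
coefficients, so that it stays non-trivial in every fibre; hence no fibre has larger dimension than
the generic one. Applied over `R / (P ∩ R)` to `B / (P ∩ B) ⊆ K / P` for the primes `P` of `K`, this
shows that the finitely many quotients `B / (P ∩ B)` are quasi-finite over `R`. Every minimal prime
of `B` is of the form `P ∩ B`, so every prime of `B` comes from one of these quotients.
-/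

open scoped Cardinal TensorProduct

section BezoutFibres

variable {R M : Type*} [CommRing R] [IsDomain R] [AddCommGroup M] [Module R M]

theorem exists_eq_mul_and_sum_mul_eq_one [IsBezout R] {ι : Type*} {s : Finset ι} {a : ι → R}
    (ha : ∃ i ∈ s, a i ≠ 0) :
    ∃ d ≠ 0, ∃ b c : ι → R, (∀ i ∈ s, a i = d * b i) ∧ ∑ i ∈ s, c i * b i = 1 := by
  classical
  let I := Ideal.span (a '' s)
  have : I.IsPrincipal := IsBezout.isPrincipal_of_FG I ⟨s.image a, by simp [I]⟩
  let d := Submodule.IsPrincipal.generator I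
  have hda : ∀ i ∈ s, d ∣ a i := fun i hi ↦
    (Submodule.IsPrincipal.mem_iff_generator_dvd I).mp (Ideal.subset_span ⟨i, hi, rfl⟩)
  have hd : d ≠ 0 := by
    obtain ⟨i, hi, hai⟩ := ha
    exact fun h ↦ hai (zero_dvd_iff.mp (h ▸ hda i hi))
  choose! b hb using hda
  obtain ⟨c, hc⟩ := (Submodule.mem_span_image_finset_iff_exists_fun' R).mp
    (Submodule.IsPrincipal.generator_mem I)
  refine ⟨d, hd, b, c, hb, mul_left_cancel₀ hd ?_⟩
  calc d * ∑ i ∈ s, c i * b i = ∑ i ∈ s, c i * a i := by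
        rw [Finset.mul_sum]
        exact Finset.sum_congr rfl fun i hi ↦ by rw [hb i hi, mul_left_comm]
    _ = d * 1 := by rw [mul_one]; exact hc

theorem linearIndependent_of_one_tmul [IsBezout R] [Module.IsTorsionFree R M] {κ ι : Type*}
    [CommRing κ] [Nontrivial κ] [Algebra R κ] {v : ι → M}
    (hv : LinearIndependent κ fun i ↦ (1 : κ) ⊗ₜ[R] v i) : LinearIndependent R v := by
  rw [linearIndependent_iff']
  intro s a hsum
  by_contra! ha
  obtain ⟨d, hd, b, c, hab, hcb⟩ := exists_eq_mul_and_sum_mul_eq_one ha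
  have hb : ∑ i ∈ s, b i • v i = 0 := by
    refine (smul_eq_zero_iff_right hd).mp ?_
    rw [Finset.smul_sum, ← hsum]
    exact Finset.sum_congr rfl fun i hi ↦ by rw [hab i hi, mul_smul]
  have hbκ : ∀ i ∈ s, algebraMap R κ (b i) = 0 := by
    refine linearIndependent_iff'.mp hv s _ ?_
    simpa [TensorProduct.tmul_sum] using congrArg ((1 : κ) ⊗ₜ[R] ·) hb
  have hone : algebraMap R κ 1 = 0 := by
    rw [← hcb, map_sum]
    exact Finset.sum_eq_zero fun i hi ↦ by rw [map_mul, hbκ i hi, mul_zero]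
  exact one_ne_zero ((map_one (algebraMap R κ)).symm.trans hone)

theorem finite_tensorProduct_of_rank_lt_aleph0 [IsBezout R] [Module.IsTorsionFree R M]
    (κ : Type*) [Field κ] [Algebra R κ] (hM : Module.rank R M < ℵ₀) :
    Module.Finite κ (κ ⊗[R] M) := by
  have hspan : Submodule.span κ (Set.range (TensorProduct.mk R κ M 1)) = ⊤ := by
    simpa [LinearMap.coe_range] using
      (Submodule.baseChange_eq_span (A := κ) (p := (⊤ : Submodule R M))).symm
  obtain ⟨t, ht, htspan, htli⟩ :=
    exists_linearIndependent κ (Set.range (TensorProduct.mk R κ M 1))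
  choose m hm using fun x : t ↦ ht x.2
  have hmli : LinearIndependent R m :=
    linearIndependent_of_one_tmul (κ := κ) (by simpa only [← TensorProduct.mk_apply, hm])
  have : Finite t := by
    rw [← Cardinal.mk_lt_aleph0_iff, ← Cardinal.lift_lt_aleph0]
    exact hmli.cardinal_lift_le_rank.trans_lt (Cardinal.lift_lt_aleph0.mpr hM)
  exact ⟨⟨(Set.toFinite t).toFinset, by simpa [hspan] using htspan⟩⟩

theorem rank_lt_aleph0_of_quasiFinite (R S : Type*) [CommRing R] [IsDomain R] [CommRing S]
    [Algebra R S] [Algebra.QuasiFinite R S] : Module.rank R S < ℵ₀ := by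
  let F := (⊥ : Ideal R).ResidueField
  have hfibre : Module.rank F (F ⊗[R] S) < ℵ₀ := Module.rank_lt_aleph0_iff.mpr inferInstance
  have hrank := IsLocalizedModule.lift_rank_eq (nonZeroDivisors R)
    (TensorProduct.mk R F S 1) le_rfl
  rwa [← Cardinal.lift_lt_aleph0, ← hrank, Cardinal.lift_lt_aleph0,
    ← IsFractionRing.rank_right_eq R F]

theorem quasiFinite_of_linearMap_injective [IsBezout R] {S T : Type*} [CommRing S] [Algebra R S]
    [Module.IsTorsionFree R S] [CommRing T] [Algebra R T] [Algebra.QuasiFinite R T]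
    (f : S →ₗ[R] T) (hf : Function.Injective f) : Algebra.QuasiFinite R S where
  finite_fiber P _ := by
    refine finite_tensorProduct_of_rank_lt_aleph0 P.ResidueField ?_
    rw [← Cardinal.lift_lt_aleph0]
    exact (LinearMap.lift_rank_le_of_injective f hf).trans_lt
      (Cardinal.lift_lt_aleph0.mpr (rank_lt_aleph0_of_quasiFinite R T))

end BezoutFibres

section Subalgebra

variable {R S T : Type*} [CommRing R] [CommRing S] [CommRing T] [Algebra R S] [Algebra R T]

theorem quasiFinite_quotient_comap [IsBezout R] [Algebra.QuasiFinite R T] (f : S →ₐ[R] T)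
    (P : Ideal T) [P.IsPrime] : Algebra.QuasiFinite R (S ⧸ P.comap f) := by
  let p := P.under R
  have : (P.comap f).LiesOver p := ⟨by ext; simp [p]⟩
  have : IsBezout (R ⧸ p) := Function.Surjective.isBezout _ Ideal.Quotient.mk_surjective
  have : Algebra.QuasiFinite (R ⧸ p) (T ⧸ P) := .of_restrictScalars R _ _
  have : Algebra.QuasiFinite (R ⧸ p) (S ⧸ P.comap f) :=
    quasiFinite_of_linearMap_injective
      ((Ideal.quotientMapₐ P f le_rfl).toLinearMap.extendScalarsOfSurjective
        Ideal.Quotient.mk_surjective)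
      (Ideal.quotientMap_injective (f := f.toRingHom))
  exact .trans R (R ⧸ p) _

theorem exists_comap_le_of_injective {f : S →+* T} (hf : Function.Injective f) (q : Ideal S)
    [q.IsPrime] : ∃ P : PrimeSpectrum T, P.asIdeal.comap f ≤ q := by
  obtain ⟨p, hp, hpq⟩ := Ideal.exists_minimalPrimes_le (bot_le : ⊥ ≤ q)
  obtain ⟨P, hP, rfl⟩ := Ideal.exists_comap_eq_of_mem_minimalPrimes_of_injective hf p hp
  exact ⟨⟨P, hP⟩, hpq⟩

theorem quasiFinite_residueField_of_injective [IsBezout R] [Algebra.QuasiFinite R T]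
    (f : S →ₐ[R] T) (hf : Function.Injective f) (q : Ideal S) [q.IsPrime] :
    Algebra.QuasiFinite R q.ResidueField := by
  obtain ⟨P, hP : P.asIdeal.comap f ≤ q⟩ := exists_comap_le_of_injective hf q
  have := quasiFinite_quotient_comap f P.asIdeal
  have : Algebra.QuasiFinite R (S ⧸ q) :=
    .of_surjective_algHom (Ideal.Quotient.factorₐ R hP) (Ideal.Quotient.factor_surjective hP)
  exact .trans R (S ⧸ q) _

theorem finite_primeSpectrum_of_injective [IsBezout R] [Finite (PrimeSpectrum R)]
    [Algebra.QuasiFinite R T] (f : S →ₐ[R] T) (hf : Function.Injective f) :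
    Finite (PrimeSpectrum S) := by
  have : Finite (PrimeSpectrum T) := Algebra.QuasiFinite.finite_primeSpectrum R T
  have hfin (P : PrimeSpectrum T) :
      (PrimeSpectrum.zeroLocus (P.asIdeal.comap f : Set S)).Finite := by
    have := quasiFinite_quotient_comap f P.asIdeal
    have := Algebra.QuasiFinite.finite_primeSpectrum R (S ⧸ P.asIdeal.comap f)
    rw [← Ideal.mk_ker (I := P.asIdeal.comap f),
      ← range_comap_of_surjective _ _ Ideal.Quotient.mk_surjective]
    exact Set.finite_range _
  refine Set.finite_univ_iff.mp ((Set.finite_iUnion hfin).subset fun q _ ↦ ?_)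
  exact Set.mem_iUnion.mpr (exists_comap_le_of_injective hf q.asIdeal)

end Subalgebra

theorem essFiniteType_of_quasiFinite (R L : Type*) [CommRing R] [Field L] [Algebra R L]
    [Algebra.QuasiFinite R L] : Algebra.EssFiniteType R L := by
  let p := RingHom.ker (algebraMap R L)
  have : p.IsPrime := RingHom.ker_isPrime _
  let g := Ideal.ResidueField.liftₐ p (Algebra.ofId R L) le_rfl
    fun _ hr ↦ isUnit_iff_ne_zero.mpr hr
  let := g.toAlgebra
  have : IsScalarTower R p.ResidueField L := .of_algebraMap_eq' g.comp_algebraMap.symm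
  have : Algebra.QuasiFinite p.ResidueField L := .of_restrictScalars R _ _
  have : Module.Finite p.ResidueField L := .of_quasiFinite
  exact .comp R p.ResidueField L

theorem finite_of_krullDim_ne_top {α : Type*} [LinearOrder α] (h : Order.krullDim α ≠ ⊤) :
    Finite α := by
  contrapose! h
  rw [Order.krullDim_eq_top_iff]
  refine ⟨fun n ↦ ?_⟩
  obtain ⟨s, hs⟩ := Infinite.exists_subset_card_eq α (n + 1)
  exact ⟨⟨n, s.orderEmbOfFin hs, fun i ↦ by simp⟩, rfl⟩

theorem finite_primeSpectrum_of_ringKrullDim_ne_top {R : Type*} [CommRing R] [PreValuationRing R]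
    (h : ringKrullDim R ≠ ⊤) : Finite (PrimeSpectrum R) := by
  have htotal : Std.Total ((· ≤ ·) : Ideal R → Ideal R → Prop) :=
    PreValuationRing.iff_ideal_total.mp inferInstance
  let _ : LinearOrder (PrimeSpectrum R) :=
    { (inferInstance : PartialOrder (PrimeSpectrum R)) with
      le_total := fun p q ↦ htotal.total p.asIdeal q.asIdeal
      toDecidableLE := Classical.decRel _ }
  exact finite_of_krullDim_ne_top h

theorem exists_finite_injective_inter {ι α : Type*} [Finite ι] {F : ι → Set α}
    (hF : Function.Injective F) :
    ∃ T : Set α, T.Finite ∧ Function.Injective fun i ↦ T ∩ F i := by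
  have hdiff (x : {x : ι × ι // x.1 ≠ x.2}) : ∃ a, ¬(a ∈ F x.1.1 ↔ a ∈ F x.1.2) := by
    by_contra! h
    exact x.2 (hF (Set.ext h))
  choose a ha using hdiff
  refine ⟨Set.range a, Set.finite_range a, fun i j hij ↦ ?_⟩
  by_contra hne
  exact ha ⟨(i, j), hne⟩ (by simpa using Set.ext_iff.mp hij (a ⟨(i, j), hne⟩))

theorem exists_finset_subfieldClosure_eq_top (A L : Type*) [CommRing A] [Field L] [Algebra A L]
    [Algebra.EssFiniteType A L] :
    ∃ σ : Finset L, Subfield.closure (Set.range (algebraMap A L) ∪ σ) = ⊤ := by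
  obtain ⟨σ, hσ⟩ := (Algebra.essFiniteType_iff A L).mp inferInstance
  have hle {x : L} (hx : x ∈ Algebra.adjoin A (σ : Set L)) :
      x ∈ Subfield.closure (Set.range (algebraMap A L) ∪ σ) := by
    rw [← Subalgebra.mem_toSubring, Algebra.adjoin_eq_ring_closure] at hx
    exact Subfield.subring_closure_le _ hx
  refine ⟨σ, eq_top_iff.mpr fun x _ ↦ ?_⟩
  obtain ⟨t, ht, htu, hxt⟩ := hσ x
  rw [← mul_div_cancel_right₀ x htu.ne_zero]
  exact div_mem (hle hxt) (hle ht)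

section ResidueField

variable {B C : Type*} [CommRing B] [CommRing C]

theorem exists_eq_algebraMap_div_algebraMap (q : Ideal B) [q.IsPrime] (x : q.ResidueField) :
    ∃ a b : B, x = algebraMap B q.ResidueField a / algebraMap B q.ResidueField b := by
  obtain ⟨a, b, -, h⟩ := IsFractionRing.div_surjective (A := B ⧸ q) x
  obtain ⟨a, rfl⟩ := Ideal.Quotient.mk_surjective a
  obtain ⟨b, rfl⟩ := Ideal.Quotient.mk_surjective b
  exact ⟨a, b, h.symm⟩

theorem exists_finite_subfieldClosure_residueField_eq_top (A : Type*) [CommRing A] [Algebra A B]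
    (q : Ideal B) [q.IsPrime] [Algebra.EssFiniteType A q.ResidueField] :
    ∃ s : Set B, s.Finite ∧ Subfield.closure
      (Set.range (algebraMap A q.ResidueField) ∪ algebraMap B q.ResidueField '' s) = ⊤ := by
  obtain ⟨σ, hσ⟩ := exists_finset_subfieldClosure_eq_top A q.ResidueField
  choose num den hdiv using exists_eq_algebraMap_div_algebraMap q
  refine ⟨num '' σ ∪ den '' σ, (σ.finite_toSet.image _).union (σ.finite_toSet.image _), ?_⟩
  rw [eq_top_iff, ← hσ, Subfield.closure_le, Set.union_subset_iff]
  refine ⟨fun x hx ↦ Subfield.subset_closure (.inl hx), fun x hx ↦ ?_⟩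
  rw [SetLike.mem_coe, hdiv x]
  exact div_mem (Subfield.subset_closure (.inr ⟨_, .inl ⟨x, hx, rfl⟩, rfl⟩))
    (Subfield.subset_closure (.inr ⟨_, .inr ⟨x, hx, rfl⟩, rfl⟩))

theorem primeSpectrum_comap_injective_of_subset_range {φ : C →+* B} {T : Set B}
    (hT : T ⊆ Set.range φ)
    (hsep : Function.Injective fun q : PrimeSpectrum B ↦ T ∩ (q.asIdeal : Set B)) :
    Function.Injective (PrimeSpectrum.comap φ) := by
  intro q q' h
  refine hsep (Set.ext fun b ↦ and_congr_right fun hb ↦ ?_)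
  obtain ⟨c, rfl⟩ := hT hb
  exact SetLike.ext_iff.mp (congrArg PrimeSpectrum.asIdeal h) c

theorem residueFieldHom_bijective {φ : C →+* B} {q : Ideal B} [q.IsPrime]
    (h : Subfield.closure (Set.range fun c ↦ algebraMap B q.ResidueField (φ c)) = ⊤) :
    Function.Bijective (residueFieldHom φ q) := by
  refine ⟨RingHom.injective _, RingHom.fieldRange_eq_top_iff.mp ?_⟩
  rw [eq_top_iff, ← h, Subfield.closure_le]
  rintro _ ⟨c, rfl⟩
  exact ⟨algebraMap C (q.comap φ).ResidueField c, Ideal.ResidueField.map_algebraMap _ _ _ _ _⟩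

end ResidueField

section PseudoIntegralClosure

variable {A K : Type*} [CommRing A] [CommRing K] [Algebra A K]

theorem isPseudoIntegralClosure_adjoin {T : Set (integralClosure A K)} (hT : T.Finite)
    (hsep : Function.Injective
      fun q : PrimeSpectrum (integralClosure A K) ↦ T ∩ (q.asIdeal : Set (integralClosure A K)))
    (hgen : ∀ (q : Ideal (integralClosure A K)) [q.IsPrime], Subfield.closure
      (Set.range (algebraMap A q.ResidueField) ∪ algebraMap _ q.ResidueField '' T) = ⊤) :
    IsPseudoIntegralClosure (Algebra.adjoin A (Subtype.val '' T)) := by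
  have hle : Algebra.adjoin A (Subtype.val '' T) ≤ integralClosure A K :=
    Algebra.adjoin_le (by rintro _ ⟨b, -, rfl⟩; exact b.2)
  let φ := Subalgebra.inclusion hle
  have hTφ : T ⊆ Set.range φ := fun b hb ↦ ⟨⟨b, Algebra.subset_adjoin ⟨b, hb, rfl⟩⟩, rfl⟩
  have hφ : φ.toRingHom.IsIntegral :=
    .tower_top (algebraMap A _) φ.toRingHom (integralClosure.isIntegral (R := A) (A := K))
  refine ⟨hle, ?_,
    ⟨primeSpectrum_comap_injective_of_subset_range hTφ hsep,
      hφ.comap_surjective (Subalgebra.inclusion_injective hle)⟩, fun q _ ↦ ?_⟩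
  · exact Module.Finite.iff_fg.mpr <| fg_adjoin_of_finite (hT.image _)
      (by rintro _ ⟨b, -, rfl⟩; exact b.2)
  · refine residueFieldHom_bijective (eq_top_iff.mpr ?_)
    rw [← hgen q]
    refine Subfield.closure_mono (Set.union_subset ?_ ?_)
    · rintro _ ⟨a, rfl⟩
      exact ⟨algebraMap A _ a, rfl⟩
    · rintro _ ⟨b, hb, rfl⟩
      obtain ⟨c, rfl⟩ := hTφ hb
      exact ⟨c, rfl⟩

theorem exists_isPseudoIntegralClosure [Finite (PrimeSpectrum (integralClosure A K))]
    (h : ∀ (q : Ideal (integralClosure A K)) [q.IsPrime],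
      Algebra.EssFiniteType A q.ResidueField) :
    ∃ C : Subalgebra A K, IsPseudoIntegralClosure C := by
  obtain ⟨T, hT, hsep⟩ := exists_finite_injective_inter
    (F := fun q : PrimeSpectrum (integralClosure A K) ↦ (q.asIdeal : Set (integralClosure A K)))
    (SetLike.coe_injective.comp fun _ _ ↦ PrimeSpectrum.ext)
  choose s hs hgen using fun q : PrimeSpectrum (integralClosure A K) ↦
    exists_finite_subfieldClosure_residueField_eq_top A q.asIdeal
  refine ⟨_, isPseudoIntegralClosure_adjoin (T := T ∪ ⋃ q, s q)
    (hT.union (Set.finite_iUnion hs)) ?_ fun q hq ↦ ?_⟩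
  · exact .of_comp (f := (T ∩ ·)) <| by
      simpa only [Function.comp_def, ← Set.inter_assoc,
        Set.inter_eq_left.mpr Set.subset_union_left] using hsep
  · refine eq_top_iff.mpr ((hgen ⟨q, hq⟩).ge.trans (Subfield.closure_mono ?_))
    gcongr
    exact (Set.subset_iUnion s ⟨q, hq⟩).trans Set.subset_union_right

end PseudoIntegralClosure

theorem exists_pseudoIntegralClosure_of_henselian_valuation_ring_general {R A K : Type*}
    [CommRing R] [IsBezout R] [Finite (PrimeSpectrum R)] [CommRing A] [Algebra R A] [CommRing K]
    [Algebra A K] (h : ((algebraMap A K).comp (algebraMap R A)).QuasiFinite) :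
    ∃ C : Subalgebra A K, IsPseudoIntegralClosure C := by
  let _ : Algebra R K := ((algebraMap A K).comp (algebraMap R A)).toAlgebra
  have : IsScalarTower R A K := .of_algebraMap_eq' rfl
  have : Algebra.QuasiFinite R K := h
  let B := integralClosure A K
  let ι : B →ₐ[R] K := B.val.restrictScalars R
  have hι : Function.Injective ι := Subtype.val_injective
  have : Finite (PrimeSpectrum B) := finite_primeSpectrum_of_injective ι hι
  refine exists_isPseudoIntegralClosure fun q _ ↦ ?_
  have : Algebra.QuasiFinite R q.ResidueField := quasiFinite_residueField_of_injective ι hι q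
  have : Algebra.EssFiniteType R q.ResidueField := essFiniteType_of_quasiFinite R _
  exact .of_comp R A _

theorem exists_pseudoIntegralClosure_of_henselian_valuation_ring
    {R A K : Type*} [CommRing R] [IsDomain R] [ValuationRing R] [HenselianLocalRing R]
    (hdim : ringKrullDim R < ⊤)
    [CommRing A] [Algebra R A] [Module.Finite R A]
    [CommRing K] [IsReduced K]
    (f : FractionRing (A ⧸ nilradical A) →+* K) (hfin : f.Finite)
    [Algebra A K]
    (hcomp : algebraMap A K =
      (f.comp (algebraMap (A ⧸ nilradical A) (FractionRing (A ⧸ nilradical A)))).comp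
        (Ideal.Quotient.mk (nilradical A))) :
    ∃ C : Subalgebra A K, IsPseudoIntegralClosure C := by
  have : Finite (PrimeSpectrum R) := finite_primeSpectrum_of_ringKrullDim_ne_top hdim.ne
  exact exists_pseudoIntegralClosure_of_henselian_valuation_ring_general (R := R) <| hcomp ▸
    (RingHom.QuasiFinite.of_finite hfin).comp (RingHom.quasiFinite_algebraMap.mpr inferInstance)
end

section
/- Let R be a henselian valuation ring of finite Krull dimension, and let φ : A → B be a homomorphism of finite R-algebras such that for every minimal prime q of B the prime φ⁻¹(q) is a minimal prime of A (so φ induces a homomorphism Q(A^red) → Q(B^red) of total rings of fractions). Let Q(A^red) → K and Q(B^red) → L be finite ring homomorphisms with K and L reduced, together with a ring homomorphism K → L making the square with Q(A^red) → Q(B^red) commute. Then for every pseudo-integral closure A^pic of A in K there exists a pseudo-integral closure B^pic of B in L such that the map K → L carries A^pic into B^pic. -/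
/-!
Let `S` be the integral closure of `B` in `L`. For a prime `m` of `L`, lying over `p` in `R`, the
ring `S ⧸ (m ∩ S)` is a torsion-free `R ⧸ p`-module inside the finite-dimensional `κ(p)`-space
`κ(m)`. Torsion-free modules over Bézout domains are flat, and elements of a flat module that are
independent in some fibre are independent, so the fibres of `S ⧸ (m ∩ S)` over `R` have bounded
dimension. Every prime of `S` contains some `m ∩ S`; hence `S` has finitely many primes, with
residue fields finitely generated over those of `B`. Finitely many elements of `S` therefore
separate its primes and generate its residue fields, and every finite subalgebra of `S` that
contains them is a pseudo-integral closure. One of these also contains the image of `A^pic`.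
-/

open scoped TensorProduct

theorem finite_of_total_of_krullDim_lt_top {α : Type*} [PartialOrder α] [Std.Total (α := α) (· ≤ ·)]
    (h : Order.krullDim α < ⊤) : Finite α := by
  classical
  by_contra hfin
  rw [not_finite_iff_infinite] at hfin
  let : LinearOrder α :=
    { le_total := Std.Total.total (r := (· ≤ ·))
      toDecidableLE := Classical.decRel _ }
  refine h.ne (ENat.WithBot.eq_top_iff_forall_ge.mpr fun n ↦ ?_)
  obtain ⟨t, -, ht⟩ := Set.infinite_univ (α := α) |>.exists_subset_card_eq (n + 1)
  exact Order.LTSeries.length_le_krullDim (LTSeries.mk n _ (t.orderEmbOfFin ht).strictMono)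

theorem finite_primeSpectrum_of_preValuationRing {R : Type*} [CommRing R]
    [PreValuationRing R] (hdim : ringKrullDim R < ⊤) : Finite (PrimeSpectrum R) :=
  have : Std.Total (α := PrimeSpectrum R) (· ≤ ·) :=
    ⟨fun p q ↦ Std.Total.total (r := (· ≤ ·)) p.asIdeal q.asIdeal⟩
  finite_of_total_of_krullDim_lt_top hdim

theorem linearIndependent_of_linearIndependent_fiber {R M ι : Type*} [CommRing R] [IsDomain R]
    [AddCommGroup M] [Module R M] [Module.Flat R M] (p : Ideal R) [p.IsPrime] {v : ι → M}
    (hv : LinearIndependent p.ResidueField fun i ↦ (1 ⊗ₜ v i : p.Fiber M)) :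
    LinearIndependent R v := by
  let e := TensorProduct.AlgebraTensorModule.cancelBaseChange R (Localization.AtPrime p)
    p.ResidueField p.ResidueField M
  have hlocal : LinearIndependent (Localization.AtPrime p)
      fun i ↦ (1 ⊗ₜ v i : Localization.AtPrime p ⊗[R] M) := by
    refine Module.IsLocalRing.linearIndependent_of_flat _ (.of_comp e.toLinearMap ?_)
    convert! hv
    simp [e]
  have hR : LinearIndependent R fun i ↦ (1 ⊗ₜ v i : Localization.AtPrime p ⊗[R] M) :=
    hlocal.restrict_scalars' R
  exact .of_comp (TensorProduct.mk R (Localization.AtPrime p) M 1) hR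

theorem finite_fiber_of_injective_of_isFractionRing {R K M V : Type*} [CommRing R] [IsDomain R]
    [Field K] [Algebra R K] [IsFractionRing R K] [AddCommGroup M] [Module R M] [Module.Flat R M]
    [AddCommGroup V] [Module R V] [Module K V] [IsScalarTower R K V] [Module.Finite K V]
    {f : M →ₗ[R] V} (hf : Function.Injective f) (p : Ideal R) [p.IsPrime] :
    Module.Finite p.ResidueField (p.Fiber M) := by
  obtain ⟨b, hb, hspan, hli⟩ := exists_linearIndependent p.ResidueField
    (Set.range fun x : M ↦ (1 ⊗ₜ x : p.Fiber M))
  have hrange : Submodule.span p.ResidueField (Set.range fun x : M ↦ (1 ⊗ₜ x : p.Fiber M)) = ⊤ := by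
    simpa using! (Submodule.baseChange_eq_span p.ResidueField (⊤ : Submodule R M)).symm
  choose v hv using fun i : b ↦ hb i.2
  have hvR : LinearIndependent R v :=
    linearIndependent_of_linearIndependent_fiber p (by simpa only [hv] using hli)
  have hfvK : LinearIndependent K (f ∘ v) :=
    (LinearIndependent.iff_fractionRing R K).mp (hvR.map' f (LinearMap.ker_eq_bot.mpr hf))
  have : Finite b := hfvK.finite
  exact Module.finite_def.mpr (hrange ▸ hspan ▸ Submodule.fg_span b.toFinite)

theorem quasiFinite_of_injective_of_isFractionRing {R K S F : Type*} [CommRing R] [IsDomain R]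
    [IsBezout R] [Field K] [Algebra R K] [IsFractionRing R K] [CommRing S] [Algebra R S] [Ring F]
    [Algebra R F] [Algebra K F] [IsScalarTower R K F] [Module.Finite K F]
    {f : S →ₐ[R] F} (hf : Function.Injective f) : Algebra.QuasiFinite R S := by
  have : Module.IsTorsionFree R F := .trans_faithfulSMul R K F
  have : Module.IsTorsionFree R S := hf.moduleIsTorsionFree f fun r s ↦ map_smul f r s
  have : Module.Flat R S := Module.Flat.flat_iff_torsion_eq_bot_of_isBezout.mpr
    (Submodule.isTorsionFree_iff_torsion_eq_bot.mp this)
  exact ⟨fun p _ ↦ finite_fiber_of_injective_of_isFractionRing (K := K) (f := f.toLinearMap) hf p⟩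

theorem exists_under_le_of_faithfulSMul {S L : Type*} [CommRing S] [CommRing L] [Algebra S L]
    [FaithfulSMul S L] (Q : Ideal S) [Q.IsPrime] :
    ∃ m : Ideal L, m.IsPrime ∧ m.under S ≤ Q := by
  obtain ⟨q, hq, hqQ⟩ := Ideal.exists_minimalPrimes_le (I := ⊥) (J := Q) bot_le
  obtain ⟨m, hm, rfl⟩ := Ideal.exists_comap_eq_of_mem_minimalPrimes_of_injective
    (FaithfulSMul.algebraMap_injective S L) q hq
  exact ⟨m, hm, hqQ⟩

section

variable (R : Type*) {S L : Type*} [CommRing R] [CommRing S] [CommRing L] [Algebra R S]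
  [Algebra R L] [Algebra S L] [IsScalarTower R S L] [Algebra.QuasiFinite R L]

theorem quasiFinite_quotient_under [IsBezout R] (m : Ideal L) [m.IsPrime] :
    Algebra.QuasiFinite R (S ⧸ m.under S) := by
  let p := m.under R
  have : IsBezout (R ⧸ p) := Ideal.Quotient.mk_surjective.isBezout (Ideal.Quotient.mk p)
  let := Localization.AtPrime.algebraOfLiesOver p m
  let : Algebra (R ⧸ p) m.ResidueField :=
    ((algebraMap p.ResidueField m.ResidueField).comp (algebraMap _ p.ResidueField)).toAlgebra
  have : IsScalarTower (R ⧸ p) p.ResidueField m.ResidueField := .of_algebraMap_eq' rfl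
  let f : S ⧸ m.under S →ₐ[R ⧸ p] m.ResidueField :=
    { (algebraMap (L ⧸ m) m.ResidueField).comp (algebraMap (S ⧸ m.under S) (L ⧸ m)) with
      commutes' := by
        refine Ideal.Quotient.mk_surjective.forall.mpr fun r ↦ ?_
        change algebraMap L m.ResidueField (algebraMap S L (algebraMap R S r)) =
          algebraMap p.ResidueField m.ResidueField (algebraMap R p.ResidueField r)
        simp only [← IsScalarTower.algebraMap_apply] }
  have hf : Function.Injective f := m.injective_algebraMap_quotient_residueField.comp
    (FaithfulSMul.algebraMap_injective (S ⧸ m.under S) (L ⧸ m))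
  have : Algebra.QuasiFinite (R ⧸ p) (S ⧸ m.under S) :=
    quasiFinite_of_injective_of_isFractionRing (K := p.ResidueField) hf
  exact .trans R (R ⧸ p) _

theorem quasiFinite_residueField_of_faithfulSMul [IsBezout R] [FaithfulSMul S L] (Q : Ideal S)
    [Q.IsPrime] : Algebra.QuasiFinite R Q.ResidueField := by
  obtain ⟨m, _, hm⟩ := exists_under_le_of_faithfulSMul (L := L) Q
  have := quasiFinite_quotient_under R (S := S) m
  have : Algebra.QuasiFinite R (S ⧸ Q) :=
    .of_surjective_algHom (Ideal.Quotient.factorₐ R hm) (Ideal.Quotient.factor_surjective hm)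
  exact .trans R (S ⧸ Q) Q.ResidueField

theorem finite_primeSpectrum_of_faithfulSMul [IsBezout R] [Finite (PrimeSpectrum R)]
    [FaithfulSMul S L] : Finite (PrimeSpectrum S) := by
  have : Finite (PrimeSpectrum L) := Algebra.QuasiFinite.finite_primeSpectrum R L
  have hfin (m : PrimeSpectrum L) :
      (PrimeSpectrum.zeroLocus (m.asIdeal.under S : Set S)).Finite := by
    have := quasiFinite_quotient_under R (S := S) m.asIdeal
    have := Algebra.QuasiFinite.finite_primeSpectrum R (S ⧸ m.asIdeal.under S)
    rw [← Ideal.mk_ker (I := m.asIdeal.under S),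
      ← range_comap_of_surjective _ _ Ideal.Quotient.mk_surjective]
    exact Set.finite_range _
  refine Set.finite_univ_iff.mp ((Set.finite_iUnion hfin).subset fun Q _ ↦ ?_)
  obtain ⟨m, hm, hmQ⟩ := exists_under_le_of_faithfulSMul (L := L) Q.asIdeal
  exact Set.mem_iUnion.mpr ⟨⟨m, hm⟩, hmQ⟩

end

theorem essFiniteType_residueField {R S : Type*} [CommRing R] [CommRing S] [Algebra R S]
    (Q : Ideal S) [Q.IsPrime] [Algebra.QuasiFinite R Q.ResidueField] :
    Algebra.EssFiniteType R Q.ResidueField := by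
  let p := Q.under R
  let := Localization.AtPrime.algebraOfLiesOver p Q
  have : Algebra.QuasiFinite p.ResidueField Q.ResidueField := .of_restrictScalars R _ _
  have : Module.Finite p.ResidueField Q.ResidueField := .of_quasiFinite
  exact .comp R p.ResidueField Q.ResidueField

theorem exists_finset_comap_injective (S : Type*) [CommRing S] [Finite (PrimeSpectrum S)] :
    ∃ U : Finset S, ∀ {D : Type*} [CommRing D] (f : D →+* S), (U : Set S) ⊆ Set.range f →
      Function.Injective (PrimeSpectrum.comap f) := by
  classical
  have hsep (x : {x : PrimeSpectrum S × PrimeSpectrum S // ¬ x.1 ≤ x.2}) :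
      ∃ u ∈ x.1.1.asIdeal, u ∉ x.1.2.asIdeal := SetLike.not_le_iff_exists.mp x.2
  choose u hu hu' using hsep
  refine ⟨(Set.finite_range u).toFinset, fun f hf ↦ ?_⟩
  have hle {P Q : PrimeSpectrum S} (h : PrimeSpectrum.comap f P = PrimeSpectrum.comap f Q) :
      P ≤ Q := by
    by_contra hPQ
    obtain ⟨d, hd⟩ := hf (by simp : u ⟨(P, Q), hPQ⟩ ∈ _)
    have hdP : d ∈ (PrimeSpectrum.comap f P).asIdeal := by
      simpa only [PrimeSpectrum.comap_asIdeal, Ideal.mem_comap, hd] using hu ⟨(P, Q), hPQ⟩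
    rw [h, PrimeSpectrum.comap_asIdeal, Ideal.mem_comap, hd] at hdP
    exact hu' ⟨(P, Q), hPQ⟩ hdP
  exact fun P Q h ↦ le_antisymm (hle h) (hle h.symm)

theorem residueFieldHom_algebraMap {A B : Type*} [CommRing A] [CommRing B] (φ : A →+* B)
    (q : Ideal B) [q.IsPrime] (a : A) :
    residueFieldHom φ q (algebraMap A (q.comap φ).ResidueField a) =
      algebraMap B q.ResidueField (φ a) :=
  Ideal.ResidueField.map_algebraMap _ _ _ rfl a

theorem exists_finset_residueFieldHom_bijective {B S : Type*} [CommRing B] [CommRing S]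
    [Algebra B S] (Q : Ideal S) [Q.IsPrime] [Algebra.EssFiniteType B Q.ResidueField] :
    ∃ V : Finset S, ∀ {D : Type*} [CommRing D] [Algebra B D] (f : D →ₐ[B] S),
      (V : Set S) ⊆ Set.range f → Function.Bijective (residueFieldHom f.toRingHom Q) := by
  classical
  obtain ⟨σ, hσ⟩ := (Algebra.essFiniteType_iff B Q.ResidueField).mp inferInstance
  have hfrac (z : Q.ResidueField) : ∃ c d : S,
      algebraMap S Q.ResidueField c / algebraMap S Q.ResidueField d = z := by
    obtain ⟨c, d, -, rfl⟩ := IsFractionRing.div_surjective (A := S ⧸ Q) z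
    obtain ⟨c, rfl⟩ := Ideal.Quotient.mk_surjective c
    obtain ⟨d, rfl⟩ := Ideal.Quotient.mk_surjective d
    exact ⟨c, d, rfl⟩
  choose num den hfrac using hfrac
  refine ⟨σ.image num ∪ σ.image den, fun f hf ↦ ⟨RingHom.injective _, ?_⟩⟩
  let E : Subfield Q.ResidueField := (residueFieldHom f.toRingHom Q).fieldRange
  have hmem {s : S} (hs : s ∈ Set.range f) : algebraMap S Q.ResidueField s ∈ E := by
    obtain ⟨d, rfl⟩ := hs
    exact ⟨_, residueFieldHom_algebraMap f.toRingHom Q d⟩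
  have hadjoin {z : Q.ResidueField} (hz : z ∈ Algebra.adjoin B (σ : Set Q.ResidueField)) :
      z ∈ E := by
    induction hz using Algebra.adjoin_induction with
    | mem z hz =>
      rw [← hfrac z]
      exact div_mem (hmem (hf (by simp [Set.mem_image_of_mem _ hz])))
        (hmem (hf (by simp [Set.mem_image_of_mem _ hz])))
    | algebraMap b =>
      rw [IsScalarTower.algebraMap_apply B S Q.ResidueField]
      exact hmem ⟨_, f.commutes b⟩
    | add x y _ _ hx hy => exact add_mem hx hy
    | mul x y _ _ hx hy => exact mul_mem hx hy
  intro z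
  obtain ⟨t, ht, htu, hzt⟩ := hσ z
  rw [← mul_div_cancel_right₀ z htu.ne_zero]
  exact div_mem (hadjoin hzt) (hadjoin ht)

theorem exists_finset_isPseudoIntegralClosure {B L : Type*} [CommRing B] [CommRing L]
    [Algebra B L] [Finite (PrimeSpectrum (integralClosure B L))]
    (hres : ∀ Q : PrimeSpectrum (integralClosure B L),
      Algebra.EssFiniteType B Q.asIdeal.ResidueField) :
    ∃ U : Finset (integralClosure B L), ∀ D : Subalgebra B L, D ≤ integralClosure B L →
      Module.Finite B D → (∀ u ∈ U, (u : L) ∈ D) → IsPseudoIntegralClosure D := by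
  classical
  have := Fintype.ofFinite (PrimeSpectrum (integralClosure B L))
  obtain ⟨U, hU⟩ := exists_finset_comap_injective (integralClosure B L)
  choose V hV using fun Q : PrimeSpectrum (integralClosure B L) ↦
    have := hres Q
    exists_finset_residueFieldHom_bijective (B := B) Q.asIdeal
  refine ⟨U ∪ Finset.univ.biUnion V, fun D hle hfin hUV ↦ ?_⟩
  have hrange {u : integralClosure B L} (hu : u ∈ U ∪ Finset.univ.biUnion V) :
      u ∈ Set.range (Subalgebra.inclusion hle) := ⟨⟨u, hUV u hu⟩, rfl⟩
  have hsurj : Function.Surjective (PrimeSpectrum.comap (Subalgebra.inclusion hle).toRingHom) := by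
    let := (Subalgebra.inclusion hle).toRingHom.toAlgebra
    have : IsScalarTower B D (integralClosure B L) :=
      .of_algebraMap_eq' (Subalgebra.inclusion hle).comp_algebraMap.symm
    have : Algebra.IsIntegral D (integralClosure B L) := .tower_top B
    have : FaithfulSMul D (integralClosure B L) :=
      (faithfulSMul_iff_algebraMap_injective _ _).mpr (Subalgebra.inclusion_injective hle)
    exact Algebra.IsIntegral.comap_surjective D (integralClosure B L)
  refine ⟨hle, hfin, ⟨hU _ fun u hu ↦ hrange ?_, hsurj⟩, fun Q hQ ↦ ?_⟩
  · exact Finset.mem_union_left _ hu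
  · refine hV ⟨Q, hQ⟩ (Subalgebra.inclusion hle) fun v hv ↦ hrange ?_
    exact Finset.mem_union_right _ (Finset.mem_biUnion.mpr ⟨_, Finset.mem_univ _, hv⟩)

theorem exists_forall_ge_isPseudoIntegralClosure (R B L : Type*) [CommRing R] [IsBezout R]
    [Finite (PrimeSpectrum R)] [CommRing B] [CommRing L] [Algebra R B] [Algebra R L]
    [Algebra B L] [IsScalarTower R B L] [Algebra.QuasiFinite R L] :
    ∃ D₀ : Subalgebra B L, Module.Finite B D₀ ∧
      ∀ D ≥ D₀, Module.Finite B D → IsPseudoIntegralClosure D := by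
  have : FaithfulSMul (integralClosure B L) L :=
    (faithfulSMul_iff_algebraMap_injective _ _).mpr Subtype.val_injective
  have := finite_primeSpectrum_of_faithfulSMul R (S := integralClosure B L) (L := L)
  obtain ⟨U, hU⟩ := exists_finset_isPseudoIntegralClosure (B := B) (L := L) fun Q ↦
    have := quasiFinite_residueField_of_faithfulSMul R (L := L) Q.asIdeal
    have : Algebra.QuasiFinite B Q.asIdeal.ResidueField := .of_restrictScalars R _ _
    essFiniteType_residueField Q.asIdeal
  refine ⟨Algebra.adjoin B (Subtype.val '' (U : Set (integralClosure B L))),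
    Algebra.finite_adjoin_of_finite_of_isIntegral (U.finite_toSet.image _) ?_,
    fun D hD hfin ↦ hU D ?_ hfin fun u hu ↦ hD (Algebra.subset_adjoin ⟨u, hu, rfl⟩)⟩
  · rintro _ ⟨u, -, rfl⟩
    exact u.2
  · exact le_integralClosure_iff_isIntegral.mpr inferInstance

theorem exists_finite_subalgebra_map_mem {A B K L : Type*} [CommRing A] [CommRing B]
    [CommRing K] [CommRing L] [Algebra A K] [Algebra B L] {φ : A →+* B} {ψ : K →+* L}
    (hcomm : ψ.comp (algebraMap A K) = (algebraMap B L).comp φ) (C : Subalgebra A K)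
    [Module.Finite A C] : ∃ D : Subalgebra B L, Module.Finite B D ∧ ∀ x ∈ C, ψ x ∈ D := by
  let := φ.toAlgebra
  let := ((algebraMap B L).comp φ).toAlgebra
  have : IsScalarTower A B L := .of_algebraMap_eq' rfl
  let ψC : C →ₐ[A] L :=
    { ψ.comp C.val.toRingHom with commutes' := fun a ↦ RingHom.congr_fun hcomm a }
  let f : B ⊗[A] C →ₐ[B] L := Algebra.TensorProduct.lift (Algebra.ofId B L) ψC fun _ _ ↦ .all _ _
  refine ⟨f.range, .of_surjective f.rangeRestrict.toLinearMap f.rangeRestrict_surjective,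
    fun x hx ↦ ⟨1 ⊗ₜ ⟨x, hx⟩, ?_⟩⟩
  simp [f, ψC]

theorem quasiFinite_of_finite_fractionRing {B L : Type*} [CommRing B] [CommRing L] [Algebra B L]
    {I : Ideal B} {h : FractionRing (B ⧸ I) →+* L} (hh : h.Finite)
    (hcomp : algebraMap B L =
      (h.comp (algebraMap (B ⧸ I) (FractionRing (B ⧸ I)))).comp (Ideal.Quotient.mk I)) :
    Algebra.QuasiFinite B L := by
  let := h.toAlgebra
  have : Module.Finite (FractionRing (B ⧸ I)) L := hh
  have : IsScalarTower B (FractionRing (B ⧸ I)) L := .of_algebraMap_eq' hcomp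
  exact .trans B (FractionRing (B ⧸ I)) L

theorem exists_pseudoIntegralClosure_compatible_general (R : Type*) {A B K L : Type*} [CommRing R]
    [IsBezout R] [Finite (PrimeSpectrum R)] [CommRing A] [CommRing B] [CommRing K] [CommRing L]
    [Algebra R B] [Algebra.QuasiFinite R B] [Algebra A K] [Algebra B L] [Algebra.QuasiFinite B L]
    {φ : A →+* B} {ψ : K →+* L} (hcomm : ψ.comp (algebraMap A K) = (algebraMap B L).comp φ)
    (C : Subalgebra A K) [Module.Finite A C] :
    ∃ D : Subalgebra B L, IsPseudoIntegralClosure D ∧ ∀ x ∈ C, ψ x ∈ D := by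
  let : Algebra R L := ((algebraMap B L).comp (algebraMap R B)).toAlgebra
  have : IsScalarTower R B L := .of_algebraMap_eq' rfl
  have : Algebra.QuasiFinite R L := .trans R B L
  obtain ⟨D₀, _, hD₀⟩ := exists_forall_ge_isPseudoIntegralClosure R B L
  obtain ⟨D₁, _, hD₁⟩ := exists_finite_subalgebra_map_mem hcomm C
  have : Module.Finite B ↥(D₀ ⊔ D₁) := Subalgebra.finite_sup D₀ D₁
  exact ⟨D₀ ⊔ D₁, hD₀ _ le_sup_left this, fun x hx ↦ le_sup_right (a := D₀) (hD₁ x hx)⟩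

theorem exists_pseudoIntegralClosure_compatible
    {R A B K L : Type*} [CommRing R] [IsDomain R] [ValuationRing R] [HenselianLocalRing R]
    (hdim : ringKrullDim R < ⊤)
    [CommRing A] [Algebra R A] [Module.Finite R A]
    [CommRing B] [Algebra R B] [Module.Finite R B]
    (φ : A →ₐ[R] B)
    (hmin : ∀ q ∈ minimalPrimes B, q.comap (φ : A →+* B) ∈ minimalPrimes A)
    [CommRing K] [IsReduced K] [CommRing L] [IsReduced L]
    (g : FractionRing (A ⧸ nilradical A) →+* K) (hg : g.Finite)
    (h : FractionRing (B ⧸ nilradical B) →+* L) (hh : h.Finite)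
    (ψ : K →+* L)
    (hsq : ψ.comp ((g.comp (algebraMap (A ⧸ nilradical A)
          (FractionRing (A ⧸ nilradical A)))).comp (Ideal.Quotient.mk (nilradical A))) =
        ((h.comp (algebraMap (B ⧸ nilradical B)
          (FractionRing (B ⧸ nilradical B)))).comp (Ideal.Quotient.mk (nilradical B))).comp
          (φ : A →+* B))
    [Algebra A K]
    (hcompA : algebraMap A K =
      (g.comp (algebraMap (A ⧸ nilradical A) (FractionRing (A ⧸ nilradical A)))).comp
        (Ideal.Quotient.mk (nilradical A)))
    [Algebra B L]
    (hcompB : algebraMap B L =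
      (h.comp (algebraMap (B ⧸ nilradical B) (FractionRing (B ⧸ nilradical B)))).comp
        (Ideal.Quotient.mk (nilradical B)))
    (C : Subalgebra A K) (hC : IsPseudoIntegralClosure C) :
    ∃ D : Subalgebra B L, IsPseudoIntegralClosure D ∧ ∀ x ∈ C, ψ x ∈ D := by
  have := finite_primeSpectrum_of_preValuationRing hdim
  have : Algebra.QuasiFinite B L := quasiFinite_of_finite_fractionRing hh hcompB
  have : Module.Finite A C := hC.2.1
  exact exists_pseudoIntegralClosure_compatible_general R (by rw [hcompA, hcompB, hsq]) C
end
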